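/- arXiv:2308.01817 — 5 statements merged into one kernel-verified Lean document; each statement's English description precedes it below -/
import Mathlib

section
/- Let M be a finite nonempty set of alternatives partitioned into nests, with B(m) denoting the nest containing alternative m. Let θ > 0, let each nest N have a dissimilarity factor τ_N with 0 < τ_N ≤ 1, and let (V_m)_{m∈M} be real deterministic utilities. Define the inclusive value IV_N = τ_N · ln( Σ_{m∈N} exp(θ V_m / τ_N) ). Then the probability vector p* given by the nested logit formula p*_m = ( exp(IV_{B(m)}) / Σ_N exp(IV_N) ) · ( exp(θ V_m / τ_{B(m)}) / Σ_{m'∈B(m)} exp(θ V_{m'} / τ_{B(m)}) ) is an optimal solution of the problem of maximizing Σ_{m∈M} V_m p_m − (1/θ) Σ_{m∈M} [ τ_{B(m)} p_m ln p_m + (1 − τ_{B(m)}) p_m ln( Σ_{m'∈B(m)} p_{m'} ) ] over all strictly positive probability vectors p on M with Σ_{m∈M} p_m = 1. -/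
open Real Finset

/-- The nested logit probability vector is an optimal solution of the
satisfaction/entropy maximization problem `MaxSatisNL`. -/
theorem nested_logit_maximizes_satisfaction
    {M 𝒩 : Type*} [Fintype M] [Nonempty M] [Fintype 𝒩] [DecidableEq 𝒩]
    (B : M → 𝒩) (hB : Function.Surjective B)
    (θ : ℝ) (hθ : 0 < θ)
    (τ : 𝒩 → ℝ) (hτ0 : ∀ N, 0 < τ N) (hτ1 : ∀ N, τ N ≤ 1)
    (V : M → ℝ)
    (IV : 𝒩 → ℝ)
    (hIV : ∀ N, IV N = τ N * Real.log (∑ m ∈ univ.filter (fun m => B m = N),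
      Real.exp (θ * V m / τ N)))
    (pstar : M → ℝ)
    (hpstar : ∀ m, pstar m =
      (Real.exp (IV (B m)) / ∑ N, Real.exp (IV N)) *
      (Real.exp (θ * V m / τ (B m)) /
        ∑ m' ∈ univ.filter (fun m' => B m' = B m), Real.exp (θ * V m' / τ (B m)))) :
    (∀ m, 0 < pstar m) ∧ (∑ m, pstar m = 1) ∧
    ∀ p : M → ℝ, (∀ m, 0 < p m) → (∑ m, p m = 1) →
      (∑ m, V m * p m -
        (1 / θ) * ∑ m, (τ (B m) * p m * Real.log (p m) +
          (1 - τ (B m)) * p m *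
            Real.log (∑ m' ∈ univ.filter (fun m' => B m' = B m), p m'))) ≤
      (∑ m, V m * pstar m -
        (1 / θ) * ∑ m, (τ (B m) * pstar m * Real.log (pstar m) +
          (1 - τ (B m)) * pstar m *
            Real.log (∑ m' ∈ univ.filter (fun m' => B m' = B m), pstar m'))) := by
  classical
  have hne : ∀ N, (univ.filter (fun m => B m = N)).Nonempty := fun N => by
    obtain ⟨m, hm⟩ := hB N
    exact ⟨m, by simp [hm]⟩
  obtain ⟨S, hS⟩ : ∃ S : 𝒩 → ℝ, ∀ N, S N = ∑ m ∈ univ.filter (fun m => B m = N),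
      Real.exp (θ * V m / τ N) := ⟨_, fun _ => rfl⟩
  have hSpos : ∀ N, 0 < S N := fun N => by
    rw [hS]; exact sum_pos (fun _ _ => Real.exp_pos _) (hne N)
  obtain ⟨D, hD⟩ : ∃ D : ℝ, D = ∑ N, Real.exp (IV N) := ⟨_, rfl⟩
  have hDpos : 0 < D := by
    rw [hD]
    exact sum_pos (fun _ _ => Real.exp_pos _) ⟨B (Classical.arbitrary M), mem_univ _⟩
  simp only [← hS] at hIV
  simp only [← hS, ← hD] at hpstar
  have hpos : ∀ m, 0 < pstar m := fun m => by
    rw [hpstar]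
    exact mul_pos (div_pos (Real.exp_pos _) hDpos) (div_pos (Real.exp_pos _) (hSpos _))
  have hQs : ∀ N, ∑ m ∈ univ.filter (fun m => B m = N), pstar m = Real.exp (IV N) / D := by
    intro N
    have h1 : ∑ m ∈ univ.filter (fun m => B m = N), pstar m
        = ∑ m ∈ univ.filter (fun m => B m = N),
          (Real.exp (IV N) / D) * (Real.exp (θ * V m / τ N) / S N) := by
      refine sum_congr rfl fun m hm => ?_
      have hm' : B m = N := by simpa using hm
      rw [hpstar, hm']
    rw [h1, ← mul_sum, ← sum_div, ← hS, div_self (hSpos N).ne', mul_one]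
  have hsum : ∑ m, pstar m = 1 := by
    rw [← sum_fiberwise univ B pstar]
    simp only [hQs]
    rw [← sum_div, ← hD, div_self hDpos.ne']
  have key : ∀ m, θ * V m = τ (B m) * Real.log (pstar m)
      + (1 - τ (B m)) * Real.log (Real.exp (IV (B m)) / D) + Real.log D := by
    intro m
    have e1 := (Real.exp_pos (IV (B m))).ne'
    have e2 := (Real.exp_pos (θ * V m / τ (B m))).ne'
    have e3 := (hSpos (B m)).ne'
    have e4 := (hτ0 (B m)).ne'
    rw [hpstar, Real.log_mul (div_ne_zero e1 hDpos.ne') (div_ne_zero e2 e3),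
      Real.log_div e1 hDpos.ne', Real.log_div e2 e3, Real.log_exp, Real.log_exp]
    have h5 : τ (B m) * (θ * V m / τ (B m)) = θ * V m := by field_simp
    have h6 := hIV (B m)
    linear_combination -h5 - h6
  refine ⟨hpos, hsum, fun p hp hp1 => ?_⟩
  -- rewrite objective
  have obj : ∀ q : M → ℝ, (∑ m, q m = 1) → (∑ m, V m * q m -
        (1 / θ) * ∑ m, (τ (B m) * q m * Real.log (q m) +
          (1 - τ (B m)) * q m *
            Real.log (∑ m' ∈ univ.filter (fun m' => B m' = B m), q m')))
      = (1 / θ) * (Real.log D + ∑ m, (τ (B m) * (q m * (Real.log (pstar m) - Real.log (q m)))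
        + (1 - τ (B m)) * (q m * (Real.log (Real.exp (IV (B m)) / D) -
          Real.log (∑ m' ∈ univ.filter (fun m' => B m' = B m), q m'))))) := by
    intro q hq
    have h1 : ∑ m, V m * q m = (1 / θ) * ∑ m, (θ * V m) * q m := by
      rw [mul_sum]
      refine sum_congr rfl fun m _ => ?_
      field_simp
    have h2 : Real.log D = ∑ m, Real.log D * q m := by rw [← mul_sum, hq, mul_one]
    rw [h1, ← mul_sub, h2, ← sum_sub_distrib, ← sum_add_distrib]
    congr 1
    refine sum_congr rfl fun m _ => ?_
    rw [key m]
    ring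
  rw [obj p hp1, obj pstar hsum]
  refine mul_le_mul_of_nonneg_left ?_ (by positivity)
  have hz : ∑ m, (τ (B m) * (pstar m * (Real.log (pstar m) - Real.log (pstar m)))
        + (1 - τ (B m)) * (pstar m * (Real.log (Real.exp (IV (B m)) / D) -
          Real.log (∑ m' ∈ univ.filter (fun m' => B m' = B m), pstar m')))) = 0 := by
    refine sum_eq_zero fun m _ => ?_
    rw [hQs]; ring
  rw [hz]
  obtain ⟨Q, hQ⟩ : ∃ Q : 𝒩 → ℝ, ∀ N, Q N = ∑ m ∈ univ.filter (fun m => B m = N), p m :=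
    ⟨_, fun _ => rfl⟩
  have hQpos : ∀ N, 0 < Q N := fun N => by
    rw [hQ]; exact sum_pos (fun _ _ => hp _) (hne N)
  simp only [← hQ]
  have gibbs : ∀ a b : ℝ, 0 < a → 0 < b → Real.log a - Real.log b ≤ a / b - 1 := by
    intro a b ha hb
    rw [← Real.log_div ha.ne' hb.ne']
    exact Real.log_le_sub_one_of_pos (div_pos ha hb)
  have hbound : ∑ m, (τ (B m) * (p m * (Real.log (pstar m) - Real.log (p m)))
        + (1 - τ (B m)) * (p m * (Real.log (Real.exp (IV (B m)) / D) - Real.log (Q (B m)))))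
      ≤ ∑ m, (τ (B m) * (p m * (pstar m / p m - 1))
        + (1 - τ (B m)) * (p m * ((Real.exp (IV (B m)) / D) / Q (B m) - 1))) := by
    refine sum_le_sum fun m _ => add_le_add ?_ ?_
    · exact mul_le_mul_of_nonneg_left (mul_le_mul_of_nonneg_left
        (gibbs _ _ (hpos m) (hp m)) (hp m).le) (hτ0 _).le
    · exact mul_le_mul_of_nonneg_left (mul_le_mul_of_nonneg_left
        (gibbs _ _ (div_pos (Real.exp_pos _) hDpos) (hQpos _)) (hp m).le)
        (sub_nonneg.2 (hτ1 _))
  have hzero : ∑ m, (τ (B m) * (p m * (pstar m / p m - 1))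
        + (1 - τ (B m)) * (p m * ((Real.exp (IV (B m)) / D) / Q (B m) - 1))) = 0 := by
    rw [← sum_fiberwise univ B]
    have h1 : ∀ N, ∑ m ∈ univ.filter (fun m => B m = N), (τ (B m) * (p m * (pstar m / p m - 1))
        + (1 - τ (B m)) * (p m * ((Real.exp (IV (B m)) / D) / Q (B m) - 1)))
        = Real.exp (IV N) / D - Q N := by
      intro N
      have h2 : ∑ m ∈ univ.filter (fun m => B m = N), (τ (B m) * (p m * (pstar m / p m - 1))
        + (1 - τ (B m)) * (p m * ((Real.exp (IV (B m)) / D) / Q (B m) - 1)))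
        = ∑ m ∈ univ.filter (fun m => B m = N), (τ N * (pstar m - p m)
          + (1 - τ N) * ((Real.exp (IV N) / D) / Q N - 1) * p m) := by
        refine sum_congr rfl fun m hm => ?_
        have hm' : B m = N := by simpa using hm
        have h3 : p m * (pstar m / p m - 1) = pstar m - p m := by
          have := (hp m).ne'
          field_simp
        rw [hm', h3]; ring
      rw [h2, sum_add_distrib, ← mul_sum, ← mul_sum, sum_sub_distrib, hQs, ← hQ]
      have h4 : (Real.exp (IV N) / D) / Q N * Q N = Real.exp (IV N) / D :=
        div_mul_cancel₀ _ (hQpos N).ne'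
      linear_combination (1 - τ N) * h4
    simp only [h1]
    rw [sum_sub_distrib, ← sum_div, ← hD, div_self hDpos.ne']
    simp only [hQ]
    rw [sum_fiberwise univ B p, hp1, sub_self]
  linarith
end

section
/- Let M be a finite nonempty set of alternatives partitioned into nests via B, with θ > 0, dissimilarity factors τ_N ∈ (0,1], and utilities (V_m)_{m∈M}. Consider the equivalent reformulated problem of minimizing Z(p_·, p_{·/·}) = Σ_N p_N ln p_N + Σ_N τ_N p_N Σ_{m∈N} p_{m/N} ln p_{m/N} − Σ_N Σ_{m∈N} p_N p_{m/N} θ V_m over strictly positive variables (p_N)_N and (p_{m/N})_{m∈N,N}, subject to Σ_N p_N = 1 and, for each nest N, Σ_{m∈N} p_{m/N} = 1. If strictly positive feasible variables (p_N, p_{m/N}) together with Lagrange multipliers λ (for Σ_N p_N = 1) and φ_N (for Σ_{m∈N} p_{m/N} = 1) satisfy the first-order stationarity conditions ∂Z/∂p_N = ln p_N + 1 + τ_N Σ_{m∈N} p_{m/N} ln p_{m/N} − Σ_{m∈N} p_{m/N} θ V_m − λ = 0 and ∂Z/∂p_{m/N} = τ_N p_N (ln p_{m/N} + 1) − p_N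 θ V_m − φ_N = 0, then p_{m/N} = exp(θ V_m/τ_N) / Σ_{m'∈N} exp(θ V_{m'}/τ_N) for every m ∈ N, and p_N = exp(IV_N) / Σ_{N'} exp(IV_{N'}) where IV_N = τ_N ln Σ_{m∈N} exp(θ V_m/τ_N). -/
open Real Finset

/-- First-order stationarity of the reformulated nested-logit
entropy problem yields the nested logit formulas for the within-nest and nest
probabilities. -/
theorem nested_logit_from_stationarity
    {M 𝒩 : Type*} [Fintype M] [Nonempty M] [Fintype 𝒩] [DecidableEq 𝒩]
    (B : M → 𝒩) (hB : Function.Surjective B)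
    (θ : ℝ) (hθ : 0 < θ)
    (τ : 𝒩 → ℝ) (hτ0 : ∀ N, 0 < τ N) (hτ1 : ∀ N, τ N ≤ 1)
    (V : M → ℝ)
    (pN : 𝒩 → ℝ) (pmN : M → ℝ) (lam : ℝ) (φ : 𝒩 → ℝ)
    (hpN : ∀ N, 0 < pN N) (hpmN : ∀ m, 0 < pmN m)
    (hsumN : ∑ N, pN N = 1)
    (hsumm : ∀ N, ∑ m ∈ univ.filter (fun m => B m = N), pmN m = 1)
    (hstatN : ∀ N, Real.log (pN N) + 1
      + τ N * ∑ m ∈ univ.filter (fun m => B m = N), pmN m * Real.log (pmN m)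
      - (∑ m ∈ univ.filter (fun m => B m = N), pmN m * (θ * V m)) - lam = 0)
    (hstatm : ∀ m, τ (B m) * pN (B m) * (Real.log (pmN m) + 1)
      - pN (B m) * (θ * V m) - φ (B m) = 0) :
    (∀ m, pmN m = Real.exp (θ * V m / τ (B m)) /
        ∑ m' ∈ univ.filter (fun m' => B m' = B m), Real.exp (θ * V m' / τ (B m))) ∧
    (∀ N, pN N =
      Real.exp (τ N * Real.log (∑ m ∈ univ.filter (fun m => B m = N),
          Real.exp (θ * V m / τ N))) /
        ∑ N', Real.exp (τ N' * Real.log (∑ m ∈ univ.filter (fun m => B m = N'),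
          Real.exp (θ * V m / τ N')))) := by
  set S : 𝒩 → ℝ := fun N => ∑ m ∈ univ.filter (fun m => B m = N), Real.exp (θ * V m / τ N) with hS
  set c : 𝒩 → ℝ := fun N => φ N / (τ N * pN N) - 1 with hc
  have hlog : ∀ m, Real.log (pmN m) = θ * V m / τ (B m) + c (B m) := by
    intro m
    have h1 := (hτ0 (B m)).ne'
    have h2 := (hpN (B m)).ne'
    have h := hstatm m
    simp only [hc]
    field_simp
    linarith
  have hp : ∀ m, pmN m = Real.exp (θ * V m / τ (B m)) * Real.exp (c (B m)) := by
    intro m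
    rw [← Real.exp_add, ← hlog, Real.exp_log (hpmN m)]
  have hSc : ∀ N, S N * Real.exp (c N) = 1 := by
    intro N
    rw [← hsumm N, hS, Finset.sum_mul]
    refine Finset.sum_congr rfl fun m hm => ?_
    have hm' := (Finset.mem_filter.mp hm).2
    rw [hp m, hm']
  have hSpos : ∀ N, S N ≠ 0 := fun N h => by simpa [h] using hSc N
  have hlS : ∀ N, c N = - Real.log (S N) := by
    intro N
    have h := congrArg Real.log (hSc N)
    rw [Real.log_mul (hSpos N) (Real.exp_ne_zero _), Real.log_exp, Real.log_one] at h
    linarith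
  have hq : ∀ N, pN N = Real.exp (τ N * Real.log (S N)) * Real.exp (lam - 1) := by
    intro N
    have h1 : τ N * ∑ m ∈ univ.filter (fun m => B m = N), pmN m * Real.log (pmN m)
        = (∑ m ∈ univ.filter (fun m => B m = N), pmN m * (θ * V m)) + τ N * c N := by
      rw [← mul_one (τ N * c N), ← hsumm N, Finset.mul_sum, Finset.mul_sum,
        ← Finset.sum_add_distrib]
      refine Finset.sum_congr rfl fun m hm => ?_
      have hm' := (Finset.mem_filter.mp hm).2
      have h2 := (hτ0 N).ne'
      rw [hlog m, hm']
      field_simp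
    have h := hstatN N
    rw [h1, hlS N] at h
    rw [← Real.exp_add, ← Real.exp_log (hpN N)]
    congr 1
    linarith
  refine ⟨fun m => ?_, fun N => ?_⟩
  · change pmN m = Real.exp (θ * V m / τ (B m)) / S (B m)
    rw [eq_div_iff (hSpos _), hp m, mul_assoc, mul_comm (Real.exp (c (B m))), hSc, mul_one]
  · change pN N = Real.exp (τ N * Real.log (S N)) / ∑ N', Real.exp (τ N' * Real.log (S N'))
    have hT : (∑ N', Real.exp (τ N' * Real.log (S N'))) * Real.exp (lam - 1) = 1 := by
      refine Eq.trans ?_ hsumN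
      rw [Finset.sum_mul]
      exact Finset.sum_congr rfl fun N' _ => (hq N').symm
    have hT0 : (∑ N', Real.exp (τ N' * Real.log (S N'))) ≠ 0 := fun h => by
      simp [h] at hT
    rw [eq_div_iff hT0, hq N, mul_assoc, mul_comm (Real.exp (lam - 1)), hT, mul_one]
end

section
/- Let M be a finite nonempty set of alternatives partitioned into nests via B, with θ > 0, dissimilarity factors τ_N ∈ (0,1], and utilities (V_m). At the nested logit probability vector p_m = ( exp(IV_{B(m)}) / Σ_N exp(IV_N) ) · ( exp(θ V_m / τ_{B(m)}) / Σ_{m'∈B(m)} exp(θ V_{m'} / τ_{B(m)}) ), the nested choice equation holds: Σ_{m∈M} V_m p_m − (1/θ) Σ_{m∈M} [ τ_{B(m)} p_m ln p_m + (1 − τ_{B(m)}) p_m ln( Σ_{m'∈B(m)} p_{m'} ) ] = (1/θ) ln( Σ_N exp(IV_N) ), where IV_N = τ_N ln Σ_{m∈N} exp(θ V_m/τ_N). -/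
open Real Finset

/-- At the nested logit probability vector the nested choice equation
holds: the nested satisfaction objective equals `(1/θ) ln Σ_N exp(IV_N)`. -/
theorem nested_logit_choice_equation
    {M 𝒩 : Type*} [Fintype M] [Nonempty M] [Fintype 𝒩] [DecidableEq 𝒩]
    (B : M → 𝒩) (hB : Function.Surjective B)
    (θ : ℝ) (hθ : 0 < θ)
    (τ : 𝒩 → ℝ) (hτ0 : ∀ N, 0 < τ N) (hτ1 : ∀ N, τ N ≤ 1)
    (V : M → ℝ)
    (IV : 𝒩 → ℝ)
    (hIV : ∀ N, IV N = τ N * Real.log (∑ m ∈ univ.filter (fun m => B m = N),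
      Real.exp (θ * V m / τ N)))
    (p : M → ℝ)
    (hp : ∀ m, p m =
      (Real.exp (IV (B m)) / ∑ N, Real.exp (IV N)) *
      (Real.exp (θ * V m / τ (B m)) /
        ∑ m' ∈ univ.filter (fun m' => B m' = B m), Real.exp (θ * V m' / τ (B m)))) :
    ∑ m, V m * p m -
      (1 / θ) * ∑ m, (τ (B m) * p m * Real.log (p m) +
        (1 - τ (B m)) * p m *
          Real.log (∑ m' ∈ univ.filter (fun m' => B m' = B m), p m'))
      = (1 / θ) * Real.log (∑ N, Real.exp (IV N)) := by
  obtain ⟨S, hS⟩ : ∃ S : 𝒩 → ℝ, ∀ N, S N = ∑ m ∈ univ.filter (fun m => B m = N),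
      Real.exp (θ * V m / τ N) := ⟨_, fun _ => rfl⟩
  obtain ⟨Z, hZ⟩ : ∃ Z : ℝ, Z = ∑ N, Real.exp (IV N) := ⟨_, rfl⟩
  have hSpos : ∀ N, 0 < S N := by
    intro N
    rw [hS]
    obtain ⟨m, hm⟩ := hB N
    exact Finset.sum_pos (fun _ _ => Real.exp_pos _) ⟨m, by simp [hm]⟩
  have hZpos : 0 < Z := by
    rw [hZ]
    obtain ⟨m⟩ := (inferInstance : Nonempty M)
    exact Finset.sum_pos (fun _ _ => Real.exp_pos _) ⟨B m, by simp⟩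
  simp only [← hS, ← hZ] at hIV hp ⊢
  have hq : ∀ N, ∑ m' ∈ univ.filter (fun m' => B m' = N), p m' = Real.exp (IV N) / Z := by
    intro N
    have h1 : ∀ m' ∈ univ.filter (fun m' => B m' = N),
        p m' = (Real.exp (IV N) / Z / S N) * Real.exp (θ * V m' / τ N) := by
      intro m' hm'
      have h2 : B m' = N := by simpa using hm'
      rw [hp, h2]
      ring
    rw [Finset.sum_congr rfl h1, ← Finset.mul_sum, ← hS]
    exact div_mul_cancel₀ _ (hSpos N).ne'
  have hsum : ∑ m, p m = 1 := by
    rw [← Finset.sum_fiberwise univ B p]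
    simp only [hq]
    rw [← Finset.sum_div, ← hZ]
    exact div_self hZpos.ne'
  have hterm : ∀ m, τ (B m) * p m * Real.log (p m) +
        (1 - τ (B m)) * p m *
          Real.log (∑ m' ∈ univ.filter (fun m' => B m' = B m), p m')
      = θ * (V m * p m) - Real.log Z * p m := by
    intro m
    have hlp : Real.log (p m) = IV (B m) - Real.log Z
        + (θ * V m / τ (B m) - Real.log (S (B m))) := by
      rw [hp, Real.log_mul (div_pos (Real.exp_pos _) hZpos).ne'
        (div_pos (Real.exp_pos _) (hSpos _)).ne',
        Real.log_div (Real.exp_pos _).ne' hZpos.ne',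
        Real.log_div (Real.exp_pos _).ne' (hSpos _).ne', Real.log_exp, Real.log_exp]
    rw [hq, hlp, Real.log_div (Real.exp_pos _).ne' hZpos.ne', Real.log_exp, hIV]
    have := (hτ0 (B m)).ne'
    field_simp
    ring
  rw [Finset.sum_congr rfl (fun m _ => hterm m), Finset.sum_sub_distrib, ← Finset.mul_sum,
    ← Finset.mul_sum, hsum]
  field_simp
  ring
end

section
/- (Theorem 2, HierMNL.) Let I, J, 𝓜, K, Q be finite nonempty sets (origins, destinations, modes, destination attributes, mode attributes), Ō_i > 0 given origin totals, and X^k_{ij}, X^q_{ijm} real attributes. Suppose strictly positive probabilities p_{j/i} > 0 and p_{m/ij} > 0 with Σ_j p_{j/i} = 1 for each i and Σ_m p_{m/ij} = 1 for each (i,j), together with multipliers 1/θ_j, 1/θ_m (with θ_j, θ_m > 0), β_k (k∈K), β_q (q∈Q), λ_i, μ_{ij}, satisfy the first-order stationarity conditions of the Lagrangian of problem HierMNL: (i) −(1/θ_j)[Ō_i(ln p_{j/i}+1)] − (1/θ_m)[Ō_i Σ_m p_{m/ij} ln p_{m/ij}] + Ō_i Σ_k β_k X^k_{ij} + Ō_i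 Σ_m p_{m/ij} Σ_q β_q X^q_{ijm} + λ_i = 0 for all i,j; and (ii) −(1/θ_m)[Ō_i p_{j/i}(ln p_{m/ij}+1)] + Ō_i p_{j/i} Σ_q β_q X^q_{ijm} + μ_{ij} = 0 for all i,j,m. Then p_{m/ij} = exp(θ_m Σ_q β_q X^q_{ijm}) / Σ_{m'} exp(θ_m Σ_q β_q X^q_{ijm'}) and p_{j/i} = exp(θ_j [Σ_k β_k X^k_{ij} + S_{ij}]) / Σ_{j'} exp(θ_j [Σ_k β_k X^k_{ij'} + S_{ij'}]), where S_{ij} = (1/θ_m) ln Σ_m exp(θ_m Σ_q β_q X^q_{ijm}). -/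
open Real Finset

theorem logit_aux {A : Type*} [Fintype A] (p v : A → ℝ) (c : ℝ)
    (hp : ∀ a, 0 < p a) (hs : ∑ a, p a = 1) (h : ∀ a, Real.log (p a) = v a + c) (a : A) :
    p a = Real.exp (v a) / ∑ b, Real.exp (v b) := by
  have h1 : ∀ a, p a = Real.exp (v a) * Real.exp c := fun a => by
    rw [← Real.exp_add, ← h a, Real.exp_log (hp a)]
  have h2 : (∑ b, Real.exp (v b)) * Real.exp c = 1 := by
    rw [Finset.sum_mul, ← hs]
    exact Finset.sum_congr rfl fun b _ => (h1 b).symm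
  have h3 : (∑ b, Real.exp (v b)) ≠ 0 := left_ne_zero_of_mul_eq_one h2
  rw [eq_div_iff h3, h1 a]
  linear_combination Real.exp (v a) * h2

/-- Theorem 2, HierMNL. First-order stationarity of the Lagrangian
of problem `HierMNL` implies the hierarchical multinomial logit formulas for the
destination and mode choice probabilities. -/
theorem hierMNL_stationarity
    {I J Mo K Q : Type*} [Fintype I] [Nonempty I] [Fintype J] [Nonempty J]
    [Fintype Mo] [Nonempty Mo] [Fintype K] [Nonempty K] [Fintype Q] [Nonempty Q]
    (O : I → ℝ) (hO : ∀ i, 0 < O i)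
    (Xk : I → J → K → ℝ) (Xq : I → J → Mo → Q → ℝ)
    (pj : I → J → ℝ) (pm : I → J → Mo → ℝ)
    (hpj : ∀ i j, 0 < pj i j) (hpm : ∀ i j m, 0 < pm i j m)
    (hsumj : ∀ i, ∑ j, pj i j = 1) (hsumm : ∀ i j, ∑ m, pm i j m = 1)
    (θj θm : ℝ) (hθj : 0 < θj) (hθm : 0 < θm)
    (βk : K → ℝ) (βq : Q → ℝ) (lam : I → ℝ) (μ : I → J → ℝ)
    (hstat1 : ∀ i j,
      -(1 / θj) * (O i * (Real.log (pj i j) + 1))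
      - (1 / θm) * (O i * ∑ m, pm i j m * Real.log (pm i j m))
      + O i * ∑ k, βk k * Xk i j k
      + O i * ∑ m, pm i j m * ∑ q, βq q * Xq i j m q
      + lam i = 0)
    (hstat2 : ∀ i j m,
      -(1 / θm) * (O i * pj i j * (Real.log (pm i j m) + 1))
      + O i * pj i j * ∑ q, βq q * Xq i j m q
      + μ i j = 0) :
    (∀ i j m, pm i j m =
      Real.exp (θm * ∑ q, βq q * Xq i j m q) /
        ∑ m', Real.exp (θm * ∑ q, βq q * Xq i j m' q)) ∧
    (∀ i j, pj i j =
      Real.exp (θj * ((∑ k, βk k * Xk i j k) +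
          (1 / θm) * Real.log (∑ m, Real.exp (θm * ∑ q, βq q * Xq i j m q)))) /
        ∑ j', Real.exp (θj * ((∑ k, βk k * Xk i j' k) +
          (1 / θm) * Real.log (∑ m, Real.exp (θm * ∑ q, βq q * Xq i j' m q))))) := by
  have hm : ∀ i j m, pm i j m =
      Real.exp (θm * ∑ q, βq q * Xq i j m q) /
        ∑ m', Real.exp (θm * ∑ q, βq q * Xq i j m' q) := by
    intro i j
    refine logit_aux (pm i j) (fun m => θm * ∑ q, βq q * Xq i j m q)
      (θm * μ i j / (O i * pj i j) - 1) (hpm i j) (hsumm i j) ?_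
    intro m
    have h := hstat2 i j m
    have h1 := (hO i).ne'
    have h2 := (hpj i j).ne'
    generalize (∑ q, βq q * Xq i j m q) = V at h ⊢
    field_simp at h ⊢
    linear_combination -h
  refine ⟨hm, ?_⟩
  intro i
  refine logit_aux (pj i) (fun j => θj * ((∑ k, βk k * Xk i j k) +
          (1 / θm) * Real.log (∑ m, Real.exp (θm * ∑ q, βq q * Xq i j m q))))
      (θj * lam i / O i - 1) (hpj i) (hsumj i) ?_
  intro j
  have hS : 0 < ∑ m, Real.exp (θm * ∑ q, βq q * Xq i j m q) :=
    Finset.sum_pos (fun _ _ => Real.exp_pos _) Finset.univ_nonempty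
  have hlog : ∀ m, Real.log (pm i j m) = θm * (∑ q, βq q * Xq i j m q)
      - Real.log (∑ m, Real.exp (θm * ∑ q, βq q * Xq i j m q)) := fun m => by
    rw [hm i j m, Real.log_div (Real.exp_pos _).ne' hS.ne', Real.log_exp]
  have hsum : ∑ m, pm i j m * Real.log (pm i j m)
      = θm * (∑ m, pm i j m * ∑ q, βq q * Xq i j m q)
        - Real.log (∑ m, Real.exp (θm * ∑ q, βq q * Xq i j m q)) := by
    simp only [hlog]
    simp only [mul_sub, Finset.sum_sub_distrib]
    rw [← Finset.sum_mul, hsumm, one_mul, Finset.mul_sum]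
    congr 1
    exact Finset.sum_congr rfl fun m _ => by ring
  have h := hstat1 i j
  rw [hsum] at h
  have h1 := (hO i).ne'
  beta_reduce
  generalize Real.log (∑ m, Real.exp (θm * ∑ q, βq q * Xq i j m q)) = L at h ⊢
  generalize (∑ m, pm i j m * ∑ q, βq q * Xq i j m q) = W at h
  generalize (∑ k, βk k * Xk i j k) = A at h ⊢
  field_simp at h ⊢
  linear_combination -h
end

section
/- Let M be a finite nonempty set of alternatives partitioned into nests via B with dissimilarity factors τ_N ∈ (0,1]. The nested entropy function H(p) = −Σ_{m∈M} [ τ_{B(m)} p_m ln p_m + (1 − τ_{B(m)}) p_m ln( Σ_{m'∈B(m)} p_{m'} ) ] is concave on the set of strictly positive probability vectors {p : p_m > 0, Σ_m p_m = 1}; hence for any θ > 0 and utilities (V_m), the objective of problem MaxSatisNL, p ↦ Σ_m V_m p_m + (1/θ) H(p), is concave on this set, so MaxSatisNL is a convex maximization problem. -/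
open Real Finset

/-- The nested entropy function is concave on the set of strictly
positive probability vectors; hence the objective of problem `MaxSatisNL` is concave
on this set, so `MaxSatisNL` is a convex maximization problem. -/
theorem nested_entropy_concave
    {M 𝒩 : Type*} [Fintype M] [Nonempty M] [Fintype 𝒩] [DecidableEq 𝒩]
    (B : M → 𝒩) (hB : Function.Surjective B)
    (τ : 𝒩 → ℝ) (hτ0 : ∀ N, 0 < τ N) (hτ1 : ∀ N, τ N ≤ 1)
    (θ : ℝ) (hθ : 0 < θ) (V : M → ℝ) :
    ConcaveOn ℝ {p : M → ℝ | (∀ m, 0 < p m) ∧ ∑ m, p m = 1}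
      (fun p => -∑ m, (τ (B m) * p m * Real.log (p m) +
        (1 - τ (B m)) * p m *
          Real.log (∑ m' ∈ univ.filter (fun m' => B m' = B m), p m'))) ∧
    ConcaveOn ℝ {p : M → ℝ | (∀ m, 0 < p m) ∧ ∑ m, p m = 1}
      (fun p => (∑ m, V m * p m) + (1 / θ) *
        (-∑ m, (τ (B m) * p m * Real.log (p m) +
          (1 - τ (B m)) * p m *
            Real.log (∑ m' ∈ univ.filter (fun m' => B m' = B m), p m')))) := by
  have hconv : Convex ℝ {p : M → ℝ | (∀ m, 0 < p m) ∧ ∑ m, p m = 1} := by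
    intro p hp q hq a b ha hb hab
    refine ⟨fun m => ?_, ?_⟩
    · have h := convex_Ioi (0 : ℝ) (hp.1 m) (hq.1 m) ha hb hab
      simpa using h
    · simp only [Pi.add_apply, Pi.smul_apply, smul_eq_mul, Finset.sum_add_distrib,
        ← Finset.mul_sum, hp.2, hq.2]
      linarith
  have key : ∀ p : M → ℝ, ∑ m, (τ (B m) * p m * Real.log (p m) +
        (1 - τ (B m)) * p m *
          Real.log (∑ m' ∈ univ.filter (fun m' => B m' = B m), p m')) =
      ∑ m, τ (B m) * (p m * Real.log (p m)) +
      ∑ N, (1 - τ N) * ((∑ m' ∈ univ.filter (fun m' => B m' = N), p m') *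
        Real.log (∑ m' ∈ univ.filter (fun m' => B m' = N), p m')) := by
    intro p
    rw [Finset.sum_add_distrib]
    congr 1
    · exact Finset.sum_congr rfl fun m _ => by ring
    · rw [← Finset.sum_fiberwise univ B]
      refine Finset.sum_congr rfl fun N _ => ?_
      rw [Finset.sum_mul, Finset.mul_sum]
      refine Finset.sum_congr rfl fun m hm => ?_
      have hm' : B m = N := (Finset.mem_filter.1 hm).2
      rw [hm']
      ring
  have hH : ConcaveOn ℝ {p : M → ℝ | (∀ m, 0 < p m) ∧ ∑ m, p m = 1}
      (fun p => -∑ m, (τ (B m) * p m * Real.log (p m) +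
        (1 - τ (B m)) * p m *
          Real.log (∑ m' ∈ univ.filter (fun m' => B m' = B m), p m'))) := by
    refine ⟨hconv, ?_⟩
    intro p hp q hq a b ha hb hab
    simp only [key, smul_eq_mul]
    have h1 : ∑ m, τ (B m) * ((a • p + b • q) m * Real.log ((a • p + b • q) m)) ≤
        a * ∑ m, τ (B m) * (p m * Real.log (p m)) +
        b * ∑ m, τ (B m) * (q m * Real.log (q m)) := by
      rw [Finset.mul_sum, Finset.mul_sum, ← Finset.sum_add_distrib]
      refine Finset.sum_le_sum fun m _ => ?_
      have h := Real.convexOn_mul_log.2 (Set.mem_Ici.2 (hp.1 m).le)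
        (Set.mem_Ici.2 (hq.1 m).le) ha hb hab
      have h' := mul_le_mul_of_nonneg_left h (hτ0 (B m)).le
      simp only [Pi.add_apply, Pi.smul_apply, smul_eq_mul] at h' ⊢
      linarith
    have h2 : ∑ N, (1 - τ N) *
          ((∑ m' ∈ univ.filter (fun m' => B m' = N), (a • p + b • q) m') *
          Real.log (∑ m' ∈ univ.filter (fun m' => B m' = N), (a • p + b • q) m')) ≤
        a * ∑ N, (1 - τ N) * ((∑ m' ∈ univ.filter (fun m' => B m' = N), p m') *
          Real.log (∑ m' ∈ univ.filter (fun m' => B m' = N), p m')) +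
        b * ∑ N, (1 - τ N) * ((∑ m' ∈ univ.filter (fun m' => B m' = N), q m') *
          Real.log (∑ m' ∈ univ.filter (fun m' => B m' = N), q m')) := by
      rw [Finset.mul_sum, Finset.mul_sum, ← Finset.sum_add_distrib]
      refine Finset.sum_le_sum fun N _ => ?_
      have h := Real.convexOn_mul_log.2
        (Set.mem_Ici.2 (Finset.sum_nonneg (s := univ.filter (fun m' => B m' = N))
          fun m _ => (hp.1 m).le))
        (Set.mem_Ici.2 (Finset.sum_nonneg (s := univ.filter (fun m' => B m' = N))
          fun m _ => (hq.1 m).le)) ha hb hab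
      have h' := mul_le_mul_of_nonneg_left h (sub_nonneg.2 (hτ1 N))
      simp only [Pi.add_apply, Pi.smul_apply, smul_eq_mul, Finset.sum_add_distrib,
        ← Finset.mul_sum] at h' ⊢
      linarith
    linarith
  refine ⟨hH, ConcaveOn.add ⟨hconv, ?_⟩ (hH.smul (one_div_pos.2 hθ).le)⟩
  intro p hp q hq a b ha hb hab
  simp only [Pi.add_apply, Pi.smul_apply, smul_eq_mul]
  rw [Finset.mul_sum, Finset.mul_sum, ← Finset.sum_add_distrib]
  exact Finset.sum_le_sum fun m _ => le_of_eq (by ring)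
end
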